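/- Let L be a τ-stable lattice with pL^∨ ⊂² L ⊂² L^∨, and let D ∈ ℳ(𝔽) satisfy L ⊆ D. Then D = L; in particular D is τ-stable. -/

import Mathlib

/-!
Duality reverses inclusions, so `L ⊆ D` gives a chain `L ⊆ D ⊆ D^∨ ⊆ L^∨`. Since length is
additive, `length (L^∨ / L) = length (D / L) + length (D^∨ / D) + length (L^∨ / D^∨)`. Both
`L^∨ / L` and `D^∨ / D` have length `2`, hence `D / L` has length `0`.
-/

open Pointwise

noncomputable section

variable (p : ℕ) [Fact p.Prime] (𝔽 : Type) [Field 𝔽] [IsAlgClosed 𝔽] [CharP 𝔽 p]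

/-- The Witt ring `W(𝔽)`. -/
abbrev Wp := WittVector p 𝔽

/-- The fraction field `K` of `W(𝔽)`. -/
abbrev Kp := FractionRing (Wp p 𝔽)

/-- `N₀ = K⁴`. -/
abbrev N0 := Fin 4 → Kp p 𝔽

/-- The symplectic form on `N₀`. -/
def omegaForm (x y : N0 p 𝔽) : Kp p 𝔽 :=
  x 0 * y 3 - x 3 * y 0 + x 1 * y 2 - x 2 * y 1

/-- The dual lattice of a `W`-submodule of `N₀`. -/
def dualL (D : Submodule (Wp p 𝔽) (N0 p 𝔽)) : Submodule (Wp p 𝔽) (N0 p 𝔽) where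
  carrier := {x | ∀ d ∈ D, omegaForm p 𝔽 x d ∈ (algebraMap (Wp p 𝔽) (Kp p 𝔽)).range}
  zero_mem' := by
    intro d hd
    have : omegaForm p 𝔽 0 d = 0 := by simp [omegaForm]
    rw [this]; exact zero_mem _
  add_mem' := by
    intro x y hx hy d hd
    have : omegaForm p 𝔽 (x + y) d = omegaForm p 𝔽 x d + omegaForm p 𝔽 y d := by
      simp [omegaForm]; ring
    rw [this]; exact add_mem (hx d hd) (hy d hd)
  smul_mem' := by
    intro c x hx d hd
    have : omegaForm p 𝔽 (c • x) d
        = algebraMap (Wp p 𝔽) (Kp p 𝔽) c * omegaForm p 𝔽 x d := by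
      simp [omegaForm, Algebra.smul_def]; ring
    rw [this]; exact mul_mem ⟨c, rfl⟩ (hx d hd)

variable (σ : Kp p 𝔽 ≃+* Kp p 𝔽)

/-- The semilinear map `τ` on `N₀`, applying `σ` to each coordinate. -/
def tauFun (x : N0 p 𝔽) : N0 p 𝔽 := fun i => σ (x i)

/-- The lattice `τD` generated by the image of `D` under `τ`. -/
def tauL (D : Submodule (Wp p 𝔽) (N0 p 𝔽)) : Submodule (Wp p 𝔽) (N0 p 𝔽) :=
  Submodule.span (Wp p 𝔽) (tauFun p 𝔽 σ '' D)

/-- `D` is a lattice in `N₀`: finitely generated over `W` and spanning `N₀` over `K`. -/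
def IsLattice (D : Submodule (Wp p 𝔽) (N0 p 𝔽)) : Prop :=
  D.FG ∧ Submodule.span (Kp p 𝔽) (D : Set (N0 p 𝔽)) = ⊤

/-- The length of the `W`-module `B / A` (as the Krull dimension of its submodule
lattice). -/
def relLength (A B : Submodule (Wp p 𝔽) (N0 p 𝔽)) : WithBot ℕ∞ :=
  Order.krullDim (Submodule (Wp p 𝔽) (B ⧸ (A.comap B.subtype)))

/-- `A ⊂ᵈ B` : `A ⊆ B` with colength `d`. -/
def SubD (d : ℕ) (A B : Submodule (Wp p 𝔽) (N0 p 𝔽)) : Prop :=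
  A ≤ B ∧ relLength p 𝔽 A B = (d : WithBot ℕ∞)

/-- Membership in `ℳ(𝔽)`. -/
def memM (D : Submodule (Wp p 𝔽) (N0 p 𝔽)) : Prop :=
  IsLattice p 𝔽 D ∧
  SubD p 𝔽 2 ((p : Wp p 𝔽) • dualL p 𝔽 D) D ∧
  SubD p 𝔽 2 D (dualL p 𝔽 D) ∧
  SubD p 𝔽 2 ((p : Wp p 𝔽) • dualL p 𝔽 D) (tauL p 𝔽 σ D) ∧
  SubD p 𝔽 2 (tauL p 𝔽 σ D) (dualL p 𝔽 D) ∧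
  relLength p 𝔽 D (D ⊔ tauL p 𝔽 σ D) ≤ 1

/-- `σ` is the automorphism of `K` induced by the Witt-vector Frobenius. -/
def IsWittFrobenius : Prop :=
  ∀ w : Wp p 𝔽, σ (algebraMap (Wp p 𝔽) (Kp p 𝔽) w)
    = algebraMap (Wp p 𝔽) (Kp p 𝔽) (WittVector.frobeniusEquiv p 𝔽 w)


section Length

variable {R M : Type*} [Ring R] [AddCommGroup M] [Module R M] {A B C E : Submodule R M}

theorem length_quotient_submoduleOf_add (hAB : A ≤ B) (hBC : B ≤ C) :
    Module.length R (B ⧸ A.submoduleOf B) + Module.length R (C ⧸ B.submoduleOf C) =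
      Module.length R (C ⧸ A.submoduleOf C) := by
  have hcomap : (A.submoduleOf C).comap (Submodule.inclusion hBC) = A.submoduleOf B := rfl
  have hle : A.submoduleOf C ≤ B.submoduleOf C := Submodule.comap_mono hAB
  refine (Module.length_eq_add_of_exact (Submodule.mapQ _ _ (Submodule.inclusion hBC) hcomap.ge)
    (Submodule.factor hle) ?_ (Submodule.factor_surjective hle) ?_).symm
  · rw [← LinearMap.ker_eq_bot, Submodule.ker_mapQ, hcomap, Submodule.mkQ_map_self]
  · rw [LinearMap.exact_iff, Submodule.ker_mapQ, Submodule.range_mapQ, Submodule.comap_id,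
      Submodule.range_inclusion, ← Submodule.submoduleOf]

theorem length_quotient_submoduleOf_eq_zero_iff :
    Module.length R (B ⧸ A.submoduleOf B) = 0 ↔ B ≤ A := by
  rw [Module.length_eq_zero_iff, Submodule.Quotient.subsingleton_iff,
    Submodule.submoduleOf_eq_top]

theorem eq_of_length_quotient_submoduleOf_le (hAB : A ≤ B) (hBC : B ≤ C) (hCE : C ≤ E)
    (hfin : Module.length R (E ⧸ A.submoduleOf E) ≠ ⊤)
    (hlen : Module.length R (E ⧸ A.submoduleOf E) ≤ Module.length R (C ⧸ B.submoduleOf C)) :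
    A = B := by
  have hsum : Module.length R (B ⧸ A.submoduleOf B) + Module.length R (C ⧸ B.submoduleOf C) ≤
      Module.length R (E ⧸ A.submoduleOf E) := by
    rw [length_quotient_submoduleOf_add hAB hBC,
      ← length_quotient_submoduleOf_add (hAB.trans hBC) hCE]
    exact le_self_add
  have hfinCB : Module.length R (C ⧸ B.submoduleOf C) ≠ ⊤ :=
    ne_top_of_le_ne_top hfin (le_add_self.trans hsum)
  have hBA : Module.length R (B ⧸ A.submoduleOf B) ≤ 0 :=
    (ENat.add_le_add_iff_right hfinCB).mp (by simpa only [zero_add] using hsum.trans hlen)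
  exact hAB.antisymm (length_quotient_submoduleOf_eq_zero_iff.mp (nonpos_iff_eq_zero.mp hBA))

end Length

theorem dualSubmodule_antitone {R S M : Type*} [CommRing R] [Field S] [AddCommGroup M]
    [Algebra R S] [Module R M] [Module S M] [IsScalarTower R S M]
    (b : LinearMap.BilinForm S M) :
    Antitone (b.dualSubmodule : Submodule R M → Submodule R M) :=
  fun _ _ hle _ hx y hy ↦ hx y (hle hy)

theorem stratum_type1_is_point_general {R S M : Type*} [CommRing R] [Field S] [AddCommGroup M]
    [Algebra R S] [Module R M] [Module S M] [IsScalarTower R S M]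
    (b : LinearMap.BilinForm S M) {L D : Submodule R M}
    (hLD : L ≤ D) (hD : D ≤ b.dualSubmodule D)
    (hfin : Module.length R (b.dualSubmodule L ⧸ L.submoduleOf (b.dualSubmodule L)) ≠ ⊤)
    (hlen : Module.length R (b.dualSubmodule L ⧸ L.submoduleOf (b.dualSubmodule L)) ≤
      Module.length R (b.dualSubmodule D ⧸ D.submoduleOf (b.dualSubmodule D))) :
    D = L :=
  (eq_of_length_quotient_submoduleOf_le hLD hD (dualSubmodule_antitone b hLD) hfin hlen).symm

/-- The symplectic form `ω` on `N₀`, bundled as a bilinear form over `K` so that lattice duality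
becomes `LinearMap.BilinForm.dualSubmodule`. -/
def omegaBilin : LinearMap.BilinForm (Kp p 𝔽) (N0 p 𝔽) :=
  LinearMap.mk₂ _ (omegaForm p 𝔽)
    (fun _ _ _ ↦ by simp only [omegaForm, Pi.add_apply]; ring)
    (fun _ _ _ ↦ by simp only [omegaForm, Pi.smul_apply, smul_eq_mul]; ring)
    (fun _ _ _ ↦ by simp only [omegaForm, Pi.add_apply]; ring)
    (fun _ _ _ ↦ by simp only [omegaForm, Pi.smul_apply, smul_eq_mul]; ring)

theorem dualL_eq_dualSubmodule (p : ℕ) [Fact p.Prime] (𝔽 : Type) [Field 𝔽] [CharP 𝔽 p]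
    (D : Submodule (Wp p 𝔽) (N0 p 𝔽)) :
    dualL p 𝔽 D = (omegaBilin p 𝔽).dualSubmodule D := by
  ext x
  simp only [LinearMap.BilinForm.mem_dualSubmodule, Submodule.mem_one]
  rfl

theorem SubD.length_eq {p : ℕ} [Fact p.Prime] {𝔽 : Type} [Field 𝔽] {d : ℕ}
    {A B : Submodule (Wp p 𝔽) (N0 p 𝔽)} (h : SubD p 𝔽 d A B) :
    Module.length (Wp p 𝔽) (B ⧸ A.submoduleOf B) = d :=
  WithBot.coe_injective ((Module.coe_length _ _).trans h.2)

/-- Let `L` be a `τ`-stable lattice with `pL^∨ ⊂² L ⊂² L^∨`, and let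
`D ∈ ℳ(𝔽)` satisfy `L ⊆ D`. Then `D = L`; in particular `D` is `τ`-stable. -/
theorem stratum_type1_is_point
    (p : ℕ) [Fact p.Prime] (hp : Odd p)
    (𝔽 : Type) [Field 𝔽] [IsAlgClosed 𝔽] [CharP 𝔽 p]
    (σ : Kp p 𝔽 ≃+* Kp p 𝔽) (hσ : IsWittFrobenius p 𝔽 σ)
    (L : Submodule (Wp p 𝔽) (N0 p 𝔽)) (hL : IsLattice p 𝔽 L)
    (hτL : tauL p 𝔽 σ L = L)
    (h1 : SubD p 𝔽 2 ((p : Wp p 𝔽) • dualL p 𝔽 L) L)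
    (h2 : SubD p 𝔽 2 L (dualL p 𝔽 L))
    (D : Submodule (Wp p 𝔽) (N0 p 𝔽)) (hD : memM p 𝔽 σ D) (hLD : L ≤ D) :
    D = L ∧ tauL p 𝔽 σ D = D := by
  have hDD : SubD p 𝔽 2 D (dualL p 𝔽 D) := hD.2.2.1
  rw [dualL_eq_dualSubmodule] at h2 hDD
  have hDL : D = L := stratum_type1_is_point_general (omegaBilin p 𝔽) hLD hDD.1
    (h2.length_eq ▸ ENat.natCast_ne_top 2) (h2.length_eq.trans hDD.length_eq.symm).le
  exact ⟨hDL, hDL ▸ hτL⟩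

end
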